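/- Let Γ₁, Γ₂ : ℝ → ℂ be smooth curves parametrized by arclength, each satisfying the Abresch–Langer self-shrinker equation Γᵢ''(t) = ⟨Γᵢ'(t), i·Γᵢ(t)⟩ · i·Γᵢ'(t). Then the product immersion φ : ℝ² → ℂ², φ(t₁,t₂) = (Γ₁(t₁), Γ₂(t₂)), satisfies the parametric self-shrinker equation H = −φ^⊥: for all (t₁,t₂), ∂₁²φ + ∂₂²φ = −( φ − ⟨φ, ∂₁φ⟩·∂₁φ − ⟨φ, ∂₂φ⟩·∂₂φ ), where ∂₁φ = (Γ₁'(t₁), 0) and ∂₂φ = (0, Γ₂'(t₂)) form an orthonormal frame, so that ∂₁²φ + ∂₂²φ is the mean curvature vector H and the right-hand side is minus the projection of the position vector φ onto the normal space. -/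

import Mathlib

/-- Real inner product on ℂ ≅ ℝ²: ⟨u,v⟩ = Re(u · conj v). -/
noncomputable def rinner (u v : ℂ) : ℝ := u.re * v.re + u.im * v.im

/-- Real inner product on ℂ² ≅ ℝ⁴. -/
noncomputable def rinner2 (u v : ℂ × ℂ) : ℝ := rinner u.1 v.1 + rinner u.2 v.2

/-!
If `‖u‖ = 1`, then `u` and `I * u` form an orthonormal basis of `ℂ`. Since multiplication by `I`
is skew-adjoint, the Abresch–Langer vector `⟨u, I * z⟩ • (I * u)` equals `-⟨z, I * u⟩ • (I * u)`,
which is minus the component of `z` normal to `u`. The normal projection along a product of curves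
acts on each factor separately, so the two planar equations together are the self-shrinker equation
of the product.
-/

theorem rinner_self (u : ℂ) : rinner u u = ‖u‖ ^ 2 := by
  rw [Complex.sq_norm, Complex.normSq_apply, rinner]

theorem rinner_I_mul_right (u z : ℂ) : rinner u (Complex.I * z) = -rinner z (Complex.I * u) := by
  simp only [rinner, Complex.I_mul_re, Complex.I_mul_im]
  ring

theorem rinner_zero_left (u : ℂ) : rinner 0 u = 0 := by
  simp [rinner]

theorem rinner_zero_right (u : ℂ) : rinner u 0 = 0 := by
  simp [rinner]

theorem rinner_smul_add_rinner_I_mul_smul (z u : ℂ) :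
    rinner z u • u + rinner z (Complex.I * u) • (Complex.I * u) = ‖u‖ ^ 2 • z := by
  rw [← rinner_self]
  apply Complex.ext <;>
    simp only [rinner, Complex.add_re, Complex.add_im, Complex.smul_re, Complex.smul_im,
      Complex.I_mul_re, Complex.I_mul_im, smul_eq_mul] <;>
    ring

theorem rinner_I_mul_smul_eq_neg_sub_of_norm_eq_one {u : ℂ} (hu : ‖u‖ = 1) (z : ℂ) :
    rinner u (Complex.I * z) • (Complex.I * u) = -(z - rinner z u • u) := by
  have decomposition : rinner z u • u + rinner z (Complex.I * u) • (Complex.I * u) = z := by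
    rw [rinner_smul_add_rinner_I_mul_smul, hu, one_pow, one_smul]
  calc rinner u (Complex.I * z) • (Complex.I * u)
      = -(rinner z (Complex.I * u) • (Complex.I * u)) := by rw [rinner_I_mul_right, neg_smul]
    _ = -(z - rinner z u • u) := by rw [eq_sub_of_add_eq' decomposition]

theorem rinner2_mk_zero_right (p : ℂ × ℂ) (u : ℂ) : rinner2 p (u, 0) = rinner p.1 u := by
  rw [rinner2, rinner_zero_right, add_zero]

theorem rinner2_zero_mk_right (p : ℂ × ℂ) (v : ℂ) : rinner2 p (0, v) = rinner p.2 v := by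
  rw [rinner2, rinner_zero_right, zero_add]

theorem sub_rinner2_smul_sub_rinner2_smul (p : ℂ × ℂ) (u v : ℂ) :
    p - rinner2 p (u, 0) • ((u, 0) : ℂ × ℂ) - rinner2 p (0, v) • ((0, v) : ℂ × ℂ) =
      (p.1 - rinner p.1 u • u, p.2 - rinner p.2 v • v) := by
  rw [rinner2_mk_zero_right, rinner2_zero_mk_right]
  ext1 <;> simp

/-- The product of two Abresch–Langer curves is a self-shrinker: with the
orthonormal frame ∂₁φ = (Γ₁', 0), ∂₂φ = (0, Γ₂'), the mean curvature vector
H = ∂₁²φ + ∂₂²φ equals minus the normal projection of the position vector φ. -/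
theorem abresch_langer_product_self_shrinker (Γ₁ Γ₂ : ℝ → ℂ)
    (hs₁ : ContDiff ℝ (⊤ : ℕ∞) Γ₁) (hs₂ : ContDiff ℝ (⊤ : ℕ∞) Γ₂)
    (harc₁ : ∀ t, ‖deriv Γ₁ t‖ = 1) (harc₂ : ∀ t, ‖deriv Γ₂ t‖ = 1)
    (hAL₁ : ∀ t, deriv (deriv Γ₁) t =
      (rinner (deriv Γ₁ t) (Complex.I * Γ₁ t)) • (Complex.I * deriv Γ₁ t))
    (hAL₂ : ∀ t, deriv (deriv Γ₂) t =
      (rinner (deriv Γ₂ t) (Complex.I * Γ₂ t)) • (Complex.I * deriv Γ₂ t)) :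
    ∀ t₁ t₂ : ℝ,
      rinner2 ((deriv Γ₁ t₁, 0) : ℂ × ℂ) ((deriv Γ₁ t₁, 0) : ℂ × ℂ) = 1 ∧
      rinner2 (((0 : ℂ), deriv Γ₂ t₂) : ℂ × ℂ) (((0 : ℂ), deriv Γ₂ t₂) : ℂ × ℂ) = 1 ∧
      rinner2 ((deriv Γ₁ t₁, 0) : ℂ × ℂ) (((0 : ℂ), deriv Γ₂ t₂) : ℂ × ℂ) = 0 ∧
      ((deriv (deriv Γ₁) t₁, deriv (deriv Γ₂) t₂) : ℂ × ℂ)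
        = -(((Γ₁ t₁, Γ₂ t₂) : ℂ × ℂ)
            - (rinner2 ((Γ₁ t₁, Γ₂ t₂) : ℂ × ℂ) ((deriv Γ₁ t₁, 0) : ℂ × ℂ))
                • ((deriv Γ₁ t₁, 0) : ℂ × ℂ)
            - (rinner2 ((Γ₁ t₁, Γ₂ t₂) : ℂ × ℂ) (((0 : ℂ), deriv Γ₂ t₂) : ℂ × ℂ))
                • (((0 : ℂ), deriv Γ₂ t₂) : ℂ × ℂ)) := by
  intro t₁ t₂
  refine ⟨?_, ?_, ?_, ?_⟩
  · rw [rinner2_mk_zero_right, rinner_self, harc₁, one_pow]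
  · rw [rinner2_zero_mk_right, rinner_self, harc₂, one_pow]
  · rw [rinner2_zero_mk_right, rinner_zero_left]
  · rw [sub_rinner2_smul_sub_rinner2_smul, Prod.neg_mk, hAL₁, hAL₂,
      rinner_I_mul_smul_eq_neg_sub_of_norm_eq_one (harc₁ t₁),
      rinner_I_mul_smul_eq_neg_sub_of_norm_eq_one (harc₂ t₂)]
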